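/- Let P be a set of n points in the plane in general position, let m be the size of a largest crossing family in the complete geometric graph K(P) (the maximum size of a set of pairwise crossing edges of K(P)), and let k be an integer with 3 ≤ k ≤ m. Then the edge set of K(P) can be partitioned into at most ⌈m/(k−1)⌉ + ⌈(n−2m)/(k−1)⌉ classes such that each class, viewed as a geometric graph on P, is k-quasi-plane. -/

import Mathlib

/-- Points of the plane. -/
abbrev Pt : Type := ℝ × ℝ

/-- A finite point set is in general position if no three of its points are collinear. -/
def GenPos (P : Finset Pt) : Prop :=
  ∀ p ∈ P, ∀ q ∈ P, ∀ r ∈ P, p ≠ q → p ≠ r → q ≠ r →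
    ¬ Collinear ℝ ({p, q, r} : Set Pt)

/-- A finite point set is in convex position: general position and no point lies in the
convex hull of the others. -/
def ConvexPos (P : Finset Pt) : Prop :=
  GenPos P ∧ ∀ p ∈ P, p ∉ convexHull ℝ ((P.erase p : Finset Pt) : Set Pt)

/-- The edge set of the complete geometric graph on `P`: all unordered pairs of
distinct points of `P`. -/
def KEdges (P : Finset Pt) : Set (Sym2 Pt) :=
  {e | ∃ p ∈ P, ∃ q ∈ P, p ≠ q ∧ e = s(p, q)}

/-- Two edges cross: they share no endpoint and their open segments intersect. -/
def Cross (e f : Sym2 Pt) : Prop :=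
  (∀ x, x ∈ e → x ∉ f) ∧
    ∃ p q r s : Pt, e = s(p, q) ∧ f = s(r, s) ∧
      (openSegment ℝ p q ∩ openSegment ℝ r s).Nonempty

/-- A set of edges is `k`-plane if each of its edges crosses at most `k` other edges
of the set. -/
def KPlane (k : ℕ) (E : Set (Sym2 Pt)) : Prop :=
  ∀ e ∈ E, {f | f ∈ E ∧ Cross e f}.ncard ≤ k

/-- A set of edges is `k`-quasi-plane if it contains no `k` pairwise crossing edges. -/
def KQuasiPlane (k : ℕ) (E : Set (Sym2 Pt)) : Prop :=
  ¬ ∃ S : Finset (Sym2 Pt), ↑S ⊆ E ∧ S.card = k ∧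
      (S : Set (Sym2 Pt)).Pairwise Cross

/-- The set of crossing pairs (unordered) of a set of edges. -/
def CrossPairs (E : Set (Sym2 Pt)) : Set (Sym2 (Sym2 Pt)) :=
  {c | ∃ e ∈ E, ∃ f ∈ E, Cross e f ∧ c = s(e, f)}

/-- A crossing family in `K(P)`: a finite set of pairwise crossing edges of `K(P)`. -/
def CrossingFamily (P : Finset Pt) (S : Finset (Sym2 Pt)) : Prop :=
  ↑S ⊆ KEdges P ∧ (S : Set (Sym2 Pt)).Pairwise Cross

/-- `E` forms a spanning tree on the point set `P`: all edges are edges of `K(P)` and the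
corresponding graph on the points of `P` is connected and acyclic. -/
def IsSpanningTreeOn (P : Finset Pt) (E : Set (Sym2 Pt)) : Prop :=
  E ⊆ KEdges P ∧
    (SimpleGraph.fromRel (fun a b : {x // x ∈ P} => s((a : Pt), (b : Pt)) ∈ E)).IsTree

/-!
Let `S` be a crossing family. Each edge `e = xx'` of `S` spans a plane double star: `e` itself, the
edges from `x` to points to the left of the directed line `xx'`, and the edges from `x'` to points
to the left of `x'x`. If `xx'` and `yy'` cross, then `y` lies to the left of `xx'` or `x` lies to
the left of `yy'`, so the edge `xy` is in one of the two double stars. Thus the `|S|` double stars,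
together with the stars of the `n - 2|S|` points not covered by `S`, cover `K(P)`. By the pigeonhole
principle a union of `k - 1` plane graphs is `k`-quasi-plane, so it suffices to put the double stars
and the stars into groups of size `k - 1`.
-/

section Orientation

variable {a b c d p q r z : Pt}

/-- Twice the signed area of the triangle `pqr`, positive when `r` lies to the left of the line
directed from `p` to `q`. -/
def orient (p q r : Pt) : ℝ := (q.1 - p.1) * (r.2 - p.2) - (q.2 - p.2) * (r.1 - p.1)

theorem orient_swap_right (p q r : Pt) : orient p r q = -orient p q r := by
  unfold orient; ring

theorem orient_rev (p q r : Pt) : orient r q p = -orient p q r := by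
  unfold orient; ring

theorem orient_lineMap (a b c : Pt) (t : ℝ) :
    orient a (AffineMap.lineMap a b t) c = t * orient a b c := by
  simp only [orient, AffineMap.fst_lineMap, AffineMap.snd_lineMap, AffineMap.lineMap_apply_ring']
  ring

theorem orient_pos_iff_of_mem_openSegment (hz : z ∈ openSegment ℝ a b) :
    0 < orient a z c ↔ 0 < orient a b c := by
  rw [openSegment_eq_image_lineMap] at hz
  obtain ⟨t, ht, rfl⟩ := hz
  rw [orient_lineMap, mul_pos_iff_of_pos_left ht.1]

theorem orient_neg_iff_of_mem_openSegment (hz : z ∈ openSegment ℝ a b) :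
    orient a z c < 0 ↔ orient a b c < 0 := by
  rw [openSegment_eq_image_lineMap] at hz
  obtain ⟨t, ht, rfl⟩ := hz
  rw [orient_lineMap, ← smul_eq_mul, smul_neg_iff_of_pos_left ht.1]

theorem orient_pos_iff_orient_neg_of_openSegment_inter
    (h : (openSegment ℝ a b ∩ openSegment ℝ c d).Nonempty) :
    0 < orient a b c ↔ orient c d a < 0 := by
  obtain ⟨z, hab, hcd⟩ := h
  rw [← orient_pos_iff_of_mem_openSegment hab, ← orient_neg_iff_of_mem_openSegment hcd,
    orient_rev a z c, neg_lt_zero]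

theorem collinear_of_orient_eq_zero (h : orient p q r = 0) : Collinear ℝ {p, q, r} := by
  obtain rfl | hpq := eq_or_ne p q
  · simpa using collinear_pair ℝ p r
  have hnorm : (q.1 - p.1) ^ 2 + (q.2 - p.2) ^ 2 ≠ 0 := fun h0 ↦ by
    rw [sq, sq, mul_self_add_mul_self_eq_zero, sub_eq_zero, sub_eq_zero] at h0
    exact hpq (Prod.ext h0.1.symm h0.2.symm)
  have hr : r ∈ line[ℝ, p, q] := by
    -- `r` equals its orthogonal projection to the line `pq`.
    convert AffineMap.lineMap_mem_affineSpan_pair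
      (((r.1 - p.1) * (q.1 - p.1) + (r.2 - p.2) * (q.2 - p.2)) /
        ((q.1 - p.1) ^ 2 + (q.2 - p.2) ^ 2)) p q using 1
    unfold orient at h
    ext
    · rw [AffineMap.fst_lineMap, AffineMap.lineMap_apply_ring']
      field_simp
      linear_combination -(q.2 - p.2) * h
    · rw [AffineMap.snd_lineMap, AffineMap.lineMap_apply_ring']
      field_simp
      linear_combination (q.1 - p.1) * h
  have hset : ({p, q, r} : Set Pt) = {r, p, q} := by grind
  exact hset ▸ collinear_insert_of_mem_affineSpan_pair hr

theorem GenPos.orient_ne_zero {P : Finset Pt} (hP : GenPos P) (hp : p ∈ P) (hq : q ∈ P)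
    (hr : r ∈ P) (hpq : p ≠ q) (hpr : p ≠ r) (hqr : q ≠ r) : orient p q r ≠ 0 :=
  fun h ↦ hP p hp q hq r hr hpq hpr hqr (collinear_of_orient_eq_zero h)

end Orientation

section Cross

variable {a b c d : Pt} {e f : Sym2 Pt} {x : Pt}

theorem Cross.openSegment_inter_nonempty (h : Cross s(a, b) s(c, d)) :
    (openSegment ℝ a b ∩ openSegment ℝ c d).Nonempty := by
  obtain ⟨-, p, q, r, s, hab, hcd, hpqrs⟩ := h
  rcases Sym2.eq_iff.1 hab with ⟨rfl, rfl⟩ | ⟨rfl, rfl⟩ <;>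
    rcases Sym2.eq_iff.1 hcd with ⟨rfl, rfl⟩ | ⟨rfl, rfl⟩ <;>
    simpa only [openSegment_symm ℝ a b, openSegment_symm ℝ c d] using hpqrs

theorem not_cross_of_mem (he : x ∈ e) (hf : x ∈ f) : ¬ Cross e f :=
  fun h ↦ h.1 x he hf

end Cross

section Plane

/-- A set of edges is plane if no two of its edges cross. -/
def IsPlane (E : Set (Sym2 Pt)) : Prop :=
  E.Pairwise fun e f ↦ ¬ Cross e f

theorem isPlane_star (v : Pt) : IsPlane {e | v ∈ e} :=
  fun _ he _ hf _ ↦ not_cross_of_mem he hf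

/-- The double star of an edge `e`: the edge `e` together with all edges that join an endpoint `x`
of `e` to a point to the left of `e`, where `e` is directed away from `x`. -/
def doubleStar (e : Sym2 Pt) : Set (Sym2 Pt) :=
  {g | g = e ∨ ∃ x x' y, e = s(x, x') ∧ g = s(x, y) ∧ 0 < orient x x' y}

theorem self_mem_doubleStar (e : Sym2 Pt) : e ∈ doubleStar e :=
  Or.inl rfl

theorem not_cross_of_orient_pos {x x' y z : Pt} (hy : 0 < orient x x' y) (hz : 0 < orient x' x z) :
    ¬ Cross s(x, y) s(x', z) := by
  intro hcross
  have hy' : orient x y x' < 0 := by rw [orient_swap_right]; exact neg_neg_of_pos hy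
  have hz' : orient x' z x < 0 := by rw [orient_swap_right]; exact neg_neg_of_pos hz
  have hy'' : 0 < orient x y x' :=
    (orient_pos_iff_orient_neg_of_openSegment_inter hcross.openSegment_inter_nonempty).2 hz'
  exact hy'.asymm hy''

theorem isPlane_doubleStar (e : Sym2 Pt) : IsPlane (doubleStar e) := by
  rintro g (rfl | ⟨x, x', y, he, rfl, hy⟩) h (rfl | ⟨u, u', z, he', rfl, hz⟩) hne
  · exact absurd rfl hne
  · exact not_cross_of_mem (x := u) (by simp [he']) (by simp)
  · exact not_cross_of_mem (x := x) (by simp) (by simp [he])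
  · rcases Sym2.eq_iff.1 (he.symm.trans he') with ⟨rfl, rfl⟩ | ⟨rfl, rfl⟩
    · exact not_cross_of_mem (Sym2.mem_mk_left x y) (Sym2.mem_mk_left x z)
    · exact not_cross_of_orient_pos hy hz

theorem Cross.mem_doubleStar_or {x x' y y' : Pt} (h : Cross s(x, x') s(y, y'))
    (h0 : orient x x' y ≠ 0) :
    s(x, y) ∈ doubleStar s(x, x') ∨ s(x, y) ∈ doubleStar s(y, y') := by
  rcases h0.lt_or_gt with hneg | hpos
  · have hinter : (openSegment ℝ y y' ∩ openSegment ℝ x x').Nonempty := by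
      simpa only [Set.inter_comm] using h.openSegment_inter_nonempty
    exact .inr <| .inr ⟨y, y', x, rfl, Sym2.eq_swap,
      (orient_pos_iff_orient_neg_of_openSegment_inter hinter).2 hneg⟩
  · exact .inl <| .inr ⟨x, x', y, rfl, rfl, hpos⟩

end Plane

section Endpoints

variable {α : Type*} [DecidableEq α]

/-- The set of endpoints of the edges in `S`. -/
def endpoints (S : Finset (Sym2 α)) : Finset α :=
  S.biUnion Sym2.toFinset

theorem mem_endpoints {S : Finset (Sym2 α)} {v : α} : v ∈ endpoints S ↔ ∃ e ∈ S, v ∈ e := by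
  simp only [endpoints, Finset.mem_biUnion, Sym2.mem_toFinset]

theorem card_endpoints {S : Finset (Sym2 α)} (hdiag : ∀ e ∈ S, ¬ e.IsDiag)
    (hdisj : (S : Set (Sym2 α)).PairwiseDisjoint Sym2.toFinset) :
    (endpoints S).card = S.card * 2 := by
  rw [endpoints, Finset.card_biUnion hdisj]
  exact Finset.sum_const_nat fun e he ↦ e.card_toFinset_of_not_isDiag (hdiag e he)

end Endpoints

section CrossingFamily

variable {P : Finset Pt} {S : Finset (Sym2 Pt)} {p q : Pt}

theorem mk_mem_kEdges : s(p, q) ∈ KEdges P ↔ p ∈ P ∧ q ∈ P ∧ p ≠ q := by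
  constructor
  · rintro ⟨p', hp', q', hq', hne, h⟩
    rcases Sym2.eq_iff.1 h with ⟨rfl, rfl⟩ | ⟨rfl, rfl⟩
    exacts [⟨hp', hq', hne⟩, ⟨hq', hp', hne.symm⟩]
  · rintro ⟨hp, hq, hne⟩
    exact ⟨p, hp, q, hq, hne, rfl⟩

theorem CrossingFamily.endpoints_subset (hS : CrossingFamily P S) : endpoints S ⊆ P := by
  intro v hv
  obtain ⟨e, he, w, rfl⟩ := mem_endpoints.1 hv
  exact (mk_mem_kEdges.1 (hS.1 he)).1

theorem CrossingFamily.card_endpoints (hS : CrossingFamily P S) :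
    (endpoints S).card = S.card * 2 := by
  refine _root_.card_endpoints (fun e he ↦ ?_) fun e he f hf hne ↦ ?_
  · obtain ⟨p, -, q, -, hpq, rfl⟩ := hS.1 he
    exact hpq
  · refine Finset.disjoint_left.2 fun v hve hvf ↦ ?_
    exact (hS.2 he hf hne).1 v (Sym2.mem_toFinset.1 hve) (Sym2.mem_toFinset.1 hvf)

theorem CrossingFamily.cast_card_sdiff_endpoints (hS : CrossingFamily P S) :
    ((P \ endpoints S).card : ℝ) = P.card - 2 * S.card := by
  rw [Finset.cast_card_sdiff hS.endpoints_subset, hS.card_endpoints]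
  push_cast
  ring

theorem CrossingFamily.exists_mem_doubleStar (hS : CrossingFamily P S) (hP : GenPos P)
    (hp : p ∈ endpoints S) (hq : q ∈ endpoints S) (hpq : p ≠ q) :
    ∃ e ∈ S, s(p, q) ∈ doubleStar e := by
  have hqP : q ∈ P := hS.endpoints_subset hq
  obtain ⟨e, he, hpe⟩ := mem_endpoints.1 hp
  obtain ⟨f, hf, hqf⟩ := mem_endpoints.1 hq
  obtain rfl | hef := eq_or_ne e f
  · obtain rfl : e = s(p, q) := (Sym2.mem_and_mem_iff hpq).1 ⟨hpe, hqf⟩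
    exact ⟨_, he, self_mem_doubleStar _⟩
  obtain ⟨p', rfl⟩ := hpe
  obtain ⟨q', rfl⟩ := hqf
  have hcross : Cross s(p, p') s(q, q') := hS.2 he hf hef
  obtain ⟨hpP, hp'P, hpp'⟩ := mk_mem_kEdges.1 (hS.1 he)
  have hp'q : p' ≠ q := by
    rintro rfl
    exact hcross.1 p' (Sym2.mem_mk_right p p') (Sym2.mem_mk_left p' q')
  rcases hcross.mem_doubleStar_or (hP.orient_ne_zero hpP hp'P hqP hpp' hpq hp'q) with h | h
  exacts [⟨_, he, h⟩, ⟨_, hf, h⟩]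

theorem CrossingFamily.kEdges_subset (hS : CrossingFamily P S) (hP : GenPos P) :
    KEdges P ⊆ (⋃ e : S, doubleStar e) ∪ ⋃ v : ↥(P \ endpoints S), {e | (v : Pt) ∈ e} := by
  rintro _ ⟨p, hp, q, hq, hpq, rfl⟩
  by_cases hpS : p ∈ endpoints S
  · by_cases hqS : q ∈ endpoints S
    · obtain ⟨e, he, hmem⟩ := hS.exists_mem_doubleStar hP hpS hqS hpq
      exact .inl (Set.mem_iUnion.2 ⟨⟨e, he⟩, hmem⟩)
    · exact .inr (Set.mem_iUnion.2 ⟨⟨q, Finset.mem_sdiff.2 ⟨hq, hqS⟩⟩, Sym2.mem_mk_right p q⟩)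
  · exact .inr (Set.mem_iUnion.2 ⟨⟨p, Finset.mem_sdiff.2 ⟨hp, hpS⟩⟩, Sym2.mem_mk_left p q⟩)

end CrossingFamily

section QuasiPlane

variable {ι : Type*} {k q : ℕ} {E E' : Set (Sym2 Pt)}

theorem KQuasiPlane.mono (h : KQuasiPlane k E') (hE : E ⊆ E') : KQuasiPlane k E :=
  fun ⟨S, hS, hcard, hcross⟩ ↦ h ⟨S, hS.trans hE, hcard, hcross⟩

theorem kQuasiPlane_iUnion [Fintype ι] {G : ι → Set (Sym2 Pt)} (hG : ∀ i, IsPlane (G i))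
    (hk : Fintype.card ι < k) : KQuasiPlane k (⋃ i, G i) := by
  rintro ⟨S, hS, rfl, hcross⟩
  choose color hcolor using fun e : S ↦ Set.mem_iUnion.1 (hS e.2)
  obtain ⟨e, f, hne, hef⟩ := Fintype.exists_ne_map_eq_of_card_lt color (by simpa using hk)
  have hne' : (e : Sym2 Pt) ≠ f := Subtype.coe_injective.ne hne
  exact hG (color e) (hcolor e) (hef ▸ hcolor f) hne' (hcross e.2 f.2 hne')

theorem exists_kQuasiPlane_iUnion_eq {κ : Type*} [Fintype ι] [Fintype κ] {G : ι → Set (Sym2 Pt)}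
    (hG : ∀ i, IsPlane (G i)) (hcard : Fintype.card ι ≤ Fintype.card κ * q) :
    ∃ F : κ → Set (Sym2 Pt), ⋃ j, F j = ⋃ i, G i ∧ ∀ j, KQuasiPlane (q + 1) (F j) := by
  classical
  obtain ⟨φ⟩ : Nonempty (ι ↪ κ × Fin q) :=
    Function.Embedding.nonempty_of_card_le (by simpa using hcard)
  refine ⟨fun j ↦ ⋃ i : {i // (φ i).1 = j}, G i, ?_, fun j ↦ ?_⟩
  · ext e
    simp
  · refine kQuasiPlane_iUnion (fun i ↦ hG i) (Nat.lt_succ_of_le ?_)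
    have hinj : Function.Injective fun i : {i // (φ i).1 = j} ↦ (φ i).2 := fun i i' h ↦
      Subtype.ext (φ.injective (Prod.ext (i.2.trans i'.2.symm) h))
    simpa using Fintype.card_le_of_injective _ hinj

theorem exists_kQuasiPlane_partition_of_subset_iUnion [LinearOrder ι] [LocallyFiniteOrderBot ι]
    {F : ι → Set (Sym2 Pt)} (hcover : E ⊆ ⋃ i, F i) (hF : ∀ i, KQuasiPlane k (F i)) :
    ∃ F' : ι → Set (Sym2 Pt), ⋃ i, F' i = E ∧ (Pairwise fun i j ↦ Disjoint (F' i) (F' j)) ∧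
      ∀ i, KQuasiPlane k (F' i) := by
  refine ⟨disjointed fun i ↦ E ∩ F i, ?_, disjoint_disjointed _, fun i ↦ ?_⟩
  · rw [iUnion_disjointed, ← Set.inter_iUnion, Set.inter_eq_left.2 hcover]
  · exact (hF i).mono ((disjointed_le _ i).trans Set.inter_subset_right)

end QuasiPlane

theorem le_natCeil_div_mul {K : Type*} [Field K] [LinearOrder K] [IsStrictOrderedRing K]
    [FloorSemiring K] (a : ℕ) {q : ℕ} (hq : 0 < q) : a ≤ ⌈(a : K) / q⌉₊ * q := by
  have hceil : (a : K) / q ≤ ⌈(a : K) / q⌉₊ := Nat.le_ceil _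
  rw [div_le_iff₀ (Nat.cast_pos.2 hq)] at hceil
  exact_mod_cast hceil

theorem stmt_12_general {P : Finset Pt} (hP : GenPos P) {S : Finset (Sym2 Pt)}
    (hS : CrossingFamily P S) {k : ℕ} (hk : 2 ≤ k) :
    ∃ c : ℕ, c ≤ ⌈(S.card : ℝ) / ((k : ℝ) - 1)⌉₊ +
        ⌈((P.card : ℝ) - 2 * S.card) / ((k : ℝ) - 1)⌉₊ ∧
      ∃ F : Fin c → Set (Sym2 Pt),
        (⋃ i, F i) = KEdges P ∧
        (Pairwise fun i j => Disjoint (F i) (F j)) ∧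
        (∀ i, KQuasiPlane k (F i)) := by
  obtain ⟨q, rfl⟩ := Nat.exists_eq_add_of_le' (one_le_two.trans hk)
  have hq : 0 < q := by lia
  rw [← hS.cast_card_sdiff_endpoints, Nat.cast_add_one, add_sub_cancel_right]
  obtain ⟨D, hD, hDq⟩ := exists_kQuasiPlane_iUnion_eq (q := q)
    (κ := Fin ⌈(S.card : ℝ) / q⌉₊) (fun e : S ↦ isPlane_doubleStar e)
    (by simpa using le_natCeil_div_mul S.card hq)
  obtain ⟨T, hT, hTq⟩ := exists_kQuasiPlane_iUnion_eq (q := q)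
    (κ := Fin ⌈((P \ endpoints S).card : ℝ) / q⌉₊)
    (fun v : ↥(P \ endpoints S) ↦ isPlane_star v)
    (by simpa using le_natCeil_div_mul (P \ endpoints S).card hq)
  have hcover : KEdges P ⊆ ⋃ i, Sum.elim D T (finSumFinEquiv.symm i) := by
    rw [finSumFinEquiv.symm.surjective.iUnion_comp (Sum.elim D T), Set.iUnion_sum]
    simpa only [Sum.elim_inl, Sum.elim_inr, hD, hT] using hS.kEdges_subset hP
  exact ⟨_, le_rfl, exists_kQuasiPlane_partition_of_subset_iUnion hcover fun i ↦
    Sum.rec hDq hTq (finSumFinEquiv.symm i)⟩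

/-- if `m` is the size of a largest crossing family of `K(P)` and
`3 ≤ k ≤ m`, then `K(P)` can be partitioned into at most `⌈m/(k-1)⌉ + ⌈(n-2m)/(k-1)⌉`
`k`-quasi-plane classes. -/
theorem stmt_12 (n : ℕ) (P : Finset Pt) (hP : GenPos P) (hcard : P.card = n)
    (m : ℕ) (hm : IsGreatest {c | ∃ S : Finset (Sym2 Pt), CrossingFamily P S ∧ S.card = c} m)
    (k : ℕ) (hk3 : 3 ≤ k) (hkm : k ≤ m) :
    ∃ c : ℕ, c ≤ ⌈(m : ℝ) / ((k : ℝ) - 1)⌉₊ + ⌈((n : ℝ) - 2 * m) / ((k : ℝ) - 1)⌉₊ ∧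
      ∃ F : Fin c → Set (Sym2 Pt),
        (⋃ i, F i) = KEdges P ∧
        (Pairwise fun i j => Disjoint (F i) (F j)) ∧
        (∀ i, KQuasiPlane k (F i)) := by
  obtain ⟨⟨S, hS, rfl⟩, -⟩ := hm
  exact hcard ▸ stmt_12_general hP hS (by lia)
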